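/- A CSTN Γ is dynamically controllable from a non-terminal configuration c = (t, ψ, h) if and only if there exists a next action (t_next, 𝒯_next) for ψ such that, for every observation o : 𝒫_next → {0,1} (where 𝒫_next = {p ∈ 𝒫 : 𝒪(p) ∈ 𝒯_next}), Γ is dynamically controllable from the next configuration c[t_next/𝒯_next, o]. -/

import Mathlib

/-!
For the forward direction, let `tn` be the least time at which a viable dynamic strategy `σ`
executes a task outside `Dom(ψ)`, over all scenarios compatible with `h`; it exists because there
are finitely many scenarios and tasks, and because `c` is not terminal. No new observation is made
before `tn`, so every compatible scenario has the same history at `tn`, namely `h`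
(`hist_eq_of_first`). Dynamicity then forces the set `Tn` of tasks executed at `tn` to be the same
in all compatible scenarios, and `σ` itself is a strategy from each configuration that follows
`(tn, Tn)`.

For the backward direction, strategies `τ o` from the next configurations are glued into
`s ↦ τ (obsOf Γ Tn s) s`. The glued strategy is dynamic: tasks of `Dom(ψ) ∪ Tn` have fixed times,
and any later task has a history containing all observations made at `tn`, so two scenarios with
the same history follow the same `τ o`.
-/

open Classical

/-- A label over propositional variables `P`: a conjunction of positive or negative
literals over distinct variables, encoded as a partial assignment (`none` means the
variable does not occur in the label). The empty label is `fun _ => none`. -/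
abbrev CLabel (P : Type) := P → Option Bool

/-- The empty label `λ`. -/
def emptyLabel (P : Type) : CLabel P := fun _ => none

/-- A scenario `s` satisfies a label `ℓ` (written `s ⊨ ℓ`). -/
def sats {P : Type} (s : P → Bool) (ℓ : CLabel P) : Prop :=
  ∀ p b, ℓ p = some b → s p = b

/-- A Conditional Simple Temporal Network over tasks `T` and propositional
variables `P`.  A labeled constraint `(X, Y, δ, ℓ)` represents `(Y - X ≤ δ, ℓ)`. -/
structure CSTN (T P : Type) where
  /-- The labeled constraints. -/
  C : Set (T × T × ℝ × CLabel P)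
  Cfin : C.Finite
  /-- The label of each task. -/
  L : T → CLabel P
  /-- The observation tasks. -/
  OT : Set T
  /-- The observation task of each propositional variable. -/
  obs : P → T
  obs_mem : ∀ p, obs p ∈ OT
  obs_inj : Function.Injective obs
  obs_surj : ∀ X ∈ OT, ∃ p, obs p = X
  /-- Restriction WD1. -/
  wd1 : ∀ c ∈ C, ∀ s : P → Bool, sats s c.2.2.2 → sats s (L c.1) ∧ sats s (L c.2.1)

namespace CSTN

variable {T P : Type} (Γ : CSTN T P)

/-- The tasks `𝒯_s` executed in scenario `s` (the tasks of the projection `Γ_s`).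
An execution strategy is encoded as a total function `σ : (P → Bool) → T → ℝ`;
the values `σ s X` for `X ∉ 𝒯_s` are irrelevant. -/
def Tasks (s : P → Bool) : Set T := {X | sats s (Γ.L X)}

/-- The history `Hist(t, s, σ)`: the partial scenario recording the values in `s` of
the propositional variables observed strictly before time `t`. -/
noncomputable def Hist (σ : (P → Bool) → T → ℝ) (t : ℝ) (s : P → Bool) : P → Option Bool :=
  fun p => if Γ.obs p ∈ Γ.Tasks s ∧ σ s (Γ.obs p) < t then some (s p) else none

/-- The execution strategy `σ` is dynamic. -/
def Dynamic (σ : (P → Bool) → T → ℝ) : Prop :=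
  ∀ s s' : P → Bool, ∀ X ∈ Γ.Tasks s,
    Γ.Hist σ (σ s X) s = Γ.Hist σ (σ s X) s' → X ∈ Γ.Tasks s' ∧ σ s' X = σ s X

/-- The execution strategy `σ` is viable: in every scenario `s`, the schedule `σ s`
satisfies all constraints of the projection `Γ_s`. -/
def Viable (σ : (P → Bool) → T → ℝ) : Prop :=
  ∀ s : P → Bool, ∀ c ∈ Γ.C, sats s c.2.2.2 → σ s c.2.1 - σ s c.1 ≤ c.2.2.1

/-- `Γ` is dynamically controllable: it admits a dynamic and viable execution strategy. -/
def DynamicallyControllable : Prop :=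
  ∃ σ : (P → Bool) → T → ℝ, Γ.Dynamic σ ∧ Γ.Viable σ

end CSTN

/-! ### Configurations and relative execution strategies -/

/-- A configuration `c = (t, ψ, h)`: a time point `t ∈ ℝ ∪ {-∞}`, a partial
schedule `ψ` (encoded as `T → Option ℝ`) and a partial scenario `h`
(encoded as `P → Option Bool`). -/
structure CConfig (T P : Type) where
  t : WithBot ℝ
  ψ : T → Option ℝ
  h : P → Option Bool

/-- Well-formedness of a configuration: `ψ` is a partial schedule up to time `t`
and the domain of `h` is `{p ∈ 𝒫 ∣ 𝒪(p) ∈ Dom(ψ)}`. -/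
def CConfig.WF {T P : Type} (Γ : CSTN T P) (c : CConfig T P) : Prop :=
  (∀ X r, c.ψ X = some r → (r : WithBot ℝ) ≤ c.t) ∧
  (∀ p, (c.h p).isSome ↔ (c.ψ (Γ.obs p)).isSome)

/-- `s ∈ Σ_𝒫[h]`: the scenario `s` is a completion of the partial scenario `h`. -/
def Compatible {P : Type} (h : P → Option Bool) (s : P → Bool) : Prop :=
  ∀ p b, h p = some b → s p = b

/-- The schedule `sch` over `𝒯_s` is a completion of the partial schedule of the
configuration `c`: its domain `𝒯_s` contains `Dom(ψ)`, it agrees with `ψ` on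
`Dom(ψ)`, and it executes all other tasks of `𝒯_s` strictly after time `c.t`. -/
def IsCompletion {T P : Type} (Γ : CSTN T P) (c : CConfig T P) (s : P → Bool)
    (sch : T → ℝ) : Prop :=
  (∀ X, (c.ψ X).isSome → X ∈ Γ.Tasks s) ∧
  (∀ X r, c.ψ X = some r → sch X = r) ∧
  (∀ X ∈ Γ.Tasks s, c.ψ X = none → c.t < (sch X : WithBot ℝ))

/-- A relative execution strategy from the configuration `c` (encoded as a total
function): it maps every scenario `s ∈ Σ_𝒫[h]` to a schedule over `𝒯_s` which is a
completion of `ψ`. -/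
def IsRelStrategy {T P : Type} (Γ : CSTN T P) (c : CConfig T P)
    (σ : (P → Bool) → T → ℝ) : Prop :=
  ∀ s : P → Bool, Compatible c.h s → IsCompletion Γ c s (σ s)

/-- The relative execution strategy `σ` from the configuration `c` is dynamic. -/
def RelDynamic {T P : Type} (Γ : CSTN T P) (c : CConfig T P)
    (σ : (P → Bool) → T → ℝ) : Prop :=
  ∀ s s' : P → Bool, Compatible c.h s → Compatible c.h s' → ∀ X ∈ Γ.Tasks s,
    Γ.Hist σ (σ s X) s = Γ.Hist σ (σ s X) s' → X ∈ Γ.Tasks s' ∧ σ s' X = σ s X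

/-- The relative execution strategy `σ` from the configuration `c` is viable:
for every scenario `s ∈ Σ_𝒫[h]`, the schedule `σ s` is feasible for `Γ_s`. -/
def RelViable {T P : Type} (Γ : CSTN T P) (c : CConfig T P)
    (σ : (P → Bool) → T → ℝ) : Prop :=
  ∀ s : P → Bool, Compatible c.h s →
    ∀ con ∈ Γ.C, sats s con.2.2.2 → σ s con.2.1 - σ s con.1 ≤ con.2.2.1

/-- The configuration `c` is terminal: `𝒯_s = Dom(ψ)` for every `s ∈ Σ_𝒫[h]`. -/
def Terminal {T P : Type} (Γ : CSTN T P) (c : CConfig T P) : Prop :=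
  ∀ s : P → Bool, Compatible c.h s → Γ.Tasks s = {X | (c.ψ X).isSome}

/-- `(t_next, 𝒯_next)` is a next action for the configuration `c`: `t_next > t` and
`𝒯_next` is a non-empty set of tasks not scheduled by `ψ`. -/
def NextAction {T P : Type} (c : CConfig T P) (tn : ℝ) (Tn : Set T) : Prop :=
  c.t < (tn : WithBot ℝ) ∧ Tn.Nonempty ∧ ∀ X ∈ Tn, c.ψ X = none

/-- The strategy `σ` from the configuration `c` has the well-defined next action
`(tn, Tn)`: for every scenario `s ∈ Σ_𝒫[h]`,
`min_{X ∈ 𝒯_s ∖ Dom(ψ)} [σ(s)]_X = tn` and `{X ∈ 𝒯_s ∣ [σ(s)]_X = tn} = Tn`. -/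
def WDNA {T P : Type} (Γ : CSTN T P) (c : CConfig T P) (σ : (P → Bool) → T → ℝ)
    (tn : ℝ) (Tn : Set T) : Prop :=
  NextAction c tn Tn ∧
  ∀ s : P → Bool, Compatible c.h s →
    IsLeast ((σ s) '' {X | X ∈ Γ.Tasks s ∧ c.ψ X = none}) tn ∧
    {X | X ∈ Γ.Tasks s ∧ σ s X = tn} = Tn

/-- The strategy `σ` has a well-defined next action. -/
def HasWDNA {T P : Type} (Γ : CSTN T P) (c : CConfig T P)
    (σ : (P → Bool) → T → ℝ) : Prop :=
  ∃ tn Tn, WDNA Γ c σ tn Tn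

/-- `o` is an observation of `𝒫_next = {p ∈ 𝒫 ∣ 𝒪(p) ∈ 𝒯_next}`: a partial
assignment with domain exactly `𝒫_next`. -/
def IsObs {T P : Type} (Γ : CSTN T P) (Tn : Set T) (o : P → Option Bool) : Prop :=
  ∀ p, (o p).isSome ↔ Γ.obs p ∈ Tn

/-- The next configuration `c[t_next/𝒯_next, o] = (t_next, ψ[t_next/𝒯_next], h ∪ o)`. -/
noncomputable def nextConfig {T P : Type} (Γ : CSTN T P) (c : CConfig T P)
    (tn : ℝ) (Tn : Set T) (o : P → Option Bool) : CConfig T P where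
  t := (tn : WithBot ℝ)
  ψ := fun X => if X ∈ Tn then some tn else c.ψ X
  h := fun p => if Γ.obs p ∈ Tn then o p else c.h p

/-- The observation of `𝒫_next` induced by the scenario `s`. -/
noncomputable def obsOf {T P : Type} (Γ : CSTN T P) (Tn : Set T) (s : P → Bool) :
    P → Option Bool :=
  fun p => if Γ.obs p ∈ Tn then some (s p) else none

/-- `Γ` is dynamically controllable from the configuration `c`: it admits a dynamic
and viable relative execution strategy from `c`. -/
def DCFrom {T P : Type} (Γ : CSTN T P) (c : CConfig T P) : Prop :=
  ∃ σ : (P → Bool) → T → ℝ, IsRelStrategy Γ c σ ∧ RelDynamic Γ c σ ∧ RelViable Γ c σ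

/-- The history of a scenario depends on the strategy only through its schedule for that
scenario. -/
lemma hist_congr {T P : Type} (Γ : CSTN T P) {σ τ : (P → Bool) → T → ℝ} {s : P → Bool}
    (h : σ s = τ s) (t : ℝ) : Γ.Hist σ t s = Γ.Hist τ t s := by
  unfold CSTN.Hist
  rw [h]

/-- If no unscheduled task is executed before `tn`, the history at `tn` is the partial scenario
of the configuration. -/
lemma hist_eq_of_first {T P : Type} {Γ : CSTN T P} {c : CConfig T P} (hwf : c.WF Γ)
    {σ : (P → Bool) → T → ℝ} (hσ : IsRelStrategy Γ c σ) {tn : ℝ} (htn : c.t < (tn : WithBot ℝ))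
    {s : P → Bool} (hs : Compatible c.h s)
    (hmin : ∀ X ∈ Γ.Tasks s, c.ψ X = none → tn ≤ σ s X) : Γ.Hist σ tn s = c.h := by
  obtain ⟨h1, h2, -⟩ := hσ s hs
  funext p
  unfold CSTN.Hist
  have hp := hwf.2 p
  cases hψ : c.ψ (Γ.obs p) with
  | none =>
    have hh : c.h p = none := by simpa [hψ] using hp
    rw [hh, if_neg]
    rintro ⟨hX, hlt⟩
    exact absurd hlt (not_lt.2 (hmin _ hX hψ))
  | some r =>
    obtain ⟨b, hb⟩ : ∃ b, c.h p = some b := by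
      simpa [hψ, Option.isSome_iff_exists] using hp
    have hr : r < tn := WithBot.coe_lt_coe.1 ((hwf.1 _ _ hψ).trans_lt htn)
    rw [if_pos ⟨h1 _ (by simp [hψ]), by rwa [h2 _ _ hψ]⟩, hb, hs p b hb]

/-- Over the compatible scenarios there is an earliest execution of an unscheduled task. -/
lemma exists_first {T P : Type} [Finite T] [Finite P] {Γ : CSTN T P} {c : CConfig T P}
    (hnt : ¬ Terminal Γ c) {σ : (P → Bool) → T → ℝ} (hσ : IsRelStrategy Γ c σ) :
    ∃ s₀ X₀, Compatible c.h s₀ ∧ X₀ ∈ Γ.Tasks s₀ ∧ c.ψ X₀ = none ∧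
      ∀ s, Compatible c.h s → ∀ X ∈ Γ.Tasks s, c.ψ X = none → σ s₀ X₀ ≤ σ s X := by
  let A : Set ((P → Bool) × T) := {q | Compatible c.h q.1 ∧ q.2 ∈ Γ.Tasks q.1 ∧ c.ψ q.2 = none}
  have hA : A.Nonempty := by
    by_contra hne
    refine hnt fun s hs => Set.Subset.antisymm (fun X hX => ?_) (fun X hX => (hσ s hs).1 X hX)
    by_contra hX'
    exact hne ⟨(s, X), hs, hX, by simpa using hX'⟩
  obtain ⟨⟨s₀, X₀⟩, ⟨hs₀, hX₀, hψ₀⟩, hmin⟩ :=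
    Set.exists_min_image A (fun q => σ q.1 q.2) A.toFinite hA
  exact ⟨s₀, X₀, hs₀, hX₀, hψ₀, fun s hs X hX hψ => hmin (s, X) ⟨hs, hX, hψ⟩⟩

/-- A scenario compatible with a next configuration is compatible with the current one. -/
lemma compatible_of_next {T P : Type} {Γ : CSTN T P} {c : CConfig T P} (hwf : c.WF Γ)
    {tn : ℝ} {Tn : Set T} (hTn : ∀ X ∈ Tn, c.ψ X = none) {o : P → Option Bool} {s : P → Bool}
    (hs : Compatible (nextConfig Γ c tn Tn o).h s) : Compatible c.h s := by
  intro p b hb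
  refine hs p b ?_
  have hp : Γ.obs p ∉ Tn := by
    intro hmem
    have := hwf.2 p
    simp [hb, hTn _ hmem] at this
  simpa [nextConfig, hp] using hb

/-- Every scenario compatible with the current configuration is compatible with the next
configuration given by the observation that it induces. -/
lemma compatible_next_obsOf {T P : Type} {Γ : CSTN T P} {c : CConfig T P} (tn : ℝ) (Tn : Set T)
    {s : P → Bool} (hs : Compatible c.h s) :
    Compatible (nextConfig Γ c tn Tn (obsOf Γ Tn s)).h s := by
  intro p b hb
  by_cases hp : Γ.obs p ∈ Tn
  · simpa [nextConfig, obsOf, hp] using hb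
  · exact hs p b (by simpa [nextConfig, hp] using hb)

lemma isObs_obsOf {T P : Type} (Γ : CSTN T P) (Tn : Set T) (s : P → Bool) :
    IsObs Γ Tn (obsOf Γ Tn s) := by
  intro p
  by_cases hp : Γ.obs p ∈ Tn <;> simp [obsOf, hp]

lemma exists_next_of_dcFrom {T P : Type} [Finite T] [Finite P] {Γ : CSTN T P} {c : CConfig T P}
    (hwf : c.WF Γ) (hnt : ¬ Terminal Γ c) (hdc : DCFrom Γ c) :
    ∃ (tn : ℝ) (Tn : Set T), NextAction c tn Tn ∧
      ∀ o : P → Option Bool, IsObs Γ Tn o → DCFrom Γ (nextConfig Γ c tn Tn o) := by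
  obtain ⟨σ, hσ, hdyn, hvia⟩ := hdc
  obtain ⟨s₀, X₀, hs₀, hX₀, hψ₀, hmin⟩ := exists_first hnt hσ
  have htn := (hσ s₀ hs₀).2.2 X₀ hX₀ hψ₀
  generalize htn_def : σ s₀ X₀ = tn at hmin htn
  have hhist : ∀ s, Compatible c.h s → Γ.Hist σ tn s = c.h := fun s hs =>
    hist_eq_of_first hwf hσ htn hs (hmin s hs)
  -- Equal histories at `tn` force equal sets of tasks executed at `tn`.
  have htrans : ∀ s s' X, Compatible c.h s → Compatible c.h s' → X ∈ Γ.Tasks s → σ s X = tn →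
      X ∈ Γ.Tasks s' ∧ σ s' X = tn := by
    intro s s' X hs hs' hX ht
    have := hdyn s s' hs hs' X hX (by rw [ht, hhist s hs, hhist s' hs'])
    rwa [ht] at this
  have hTn : ∀ X ∈ {X | X ∈ Γ.Tasks s₀ ∧ σ s₀ X = tn}, c.ψ X = none := by
    rintro X ⟨-, ht⟩
    by_contra hne
    obtain ⟨r, hr⟩ := Option.ne_none_iff_exists'.1 hne
    have h := (hσ s₀ hs₀).2.1 X r hr
    exact absurd ((hwf.1 X r hr).trans_lt htn) (by rw [← h, ht]; exact lt_irrefl _)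
  refine ⟨tn, {X | X ∈ Γ.Tasks s₀ ∧ σ s₀ X = tn}, ⟨htn, ⟨X₀, hX₀, htn_def⟩, hTn⟩, fun o _ => ?_⟩
  refine ⟨σ, fun s hs => ?_,
    fun s s' hs hs' => hdyn s s' (compatible_of_next hwf hTn hs) (compatible_of_next hwf hTn hs'),
    fun s hs => hvia s (compatible_of_next hwf hTn hs)⟩
  replace hs := compatible_of_next hwf hTn hs
  obtain ⟨h1, h2, h3⟩ := hσ s hs
  refine ⟨fun X hX => ?_, fun X r hX => ?_, fun X hXs hX => ?_⟩
  · by_cases hmem : X ∈ {X | X ∈ Γ.Tasks s₀ ∧ σ s₀ X = tn}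
    · exact (htrans s₀ s X hs₀ hs hmem.1 hmem.2).1
    · simp only [nextConfig, if_neg hmem] at hX
      exact h1 X hX
  · by_cases hmem : X ∈ {X | X ∈ Γ.Tasks s₀ ∧ σ s₀ X = tn}
    · simp only [nextConfig, if_pos hmem, Option.some.injEq] at hX
      rw [← hX]
      exact (htrans s₀ s X hs₀ hs hmem.1 hmem.2).2
    · simp only [nextConfig, if_neg hmem] at hX
      exact h2 X r hX
  · by_cases hmem : X ∈ {X | X ∈ Γ.Tasks s₀ ∧ σ s₀ X = tn}
    · simp only [nextConfig, if_pos hmem, reduceCtorEq] at hX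
    · simp only [nextConfig, if_neg hmem] at hX
      refine WithBot.coe_lt_coe.2 (lt_of_le_of_ne (hmin s hs X hXs hX) fun heq => hmem ?_)
      exact htrans s s₀ X hs hs₀ hXs heq.symm

lemma dcFrom_of_next {T P : Type} {Γ : CSTN T P} {c : CConfig T P} {tn : ℝ} {Tn : Set T}
    (hna : NextAction c tn Tn)
    (hdc : ∀ o : P → Option Bool, IsObs Γ Tn o → DCFrom Γ (nextConfig Γ c tn Tn o)) :
    DCFrom Γ c := by
  obtain ⟨htn, -, hTn⟩ := hna
  choose τ hstr hdyn hvia using hdc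
  let σ : (P → Bool) → T → ℝ := fun s => τ (obsOf Γ Tn s) (isObs_obsOf Γ Tn s) s
  have hcomp : ∀ s, Compatible c.h s →
      IsCompletion Γ (nextConfig Γ c tn Tn (obsOf Γ Tn s)) s (σ s) := fun s hs =>
    hstr _ _ s (compatible_next_obsOf tn Tn hs)
  have hTnσ : ∀ s, Compatible c.h s → ∀ X ∈ Tn, X ∈ Γ.Tasks s ∧ σ s X = tn := by
    intro s hs X hX
    have hψ : (nextConfig Γ c tn Tn (obsOf Γ Tn s)).ψ X = some tn := by simp [nextConfig, hX]
    exact ⟨(hcomp s hs).1 X (by simp [hψ]), (hcomp s hs).2.1 X tn hψ⟩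
  have hψσ : ∀ s, Compatible c.h s → ∀ X r, c.ψ X = some r → X ∈ Γ.Tasks s ∧ σ s X = r := by
    intro s hs X r hr
    have hX : X ∉ Tn := fun hX => by simp [hTn X hX] at hr
    have hψ : (nextConfig Γ c tn Tn (obsOf Γ Tn s)).ψ X = some r := by simpa [nextConfig, hX]
    exact ⟨(hcomp s hs).1 X (by simp [hψ]), (hcomp s hs).2.1 X r hψ⟩
  have hlate : ∀ s, Compatible c.h s → ∀ X ∈ Γ.Tasks s, c.ψ X = none → X ∉ Tn → tn < σ s X := by
    intro s hs X hXs hX hmem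
    exact WithBot.coe_lt_coe.1 ((hcomp s hs).2.2 X hXs (by simpa [nextConfig, hmem] using hX))
  refine ⟨σ, fun s hs => ⟨fun X hX => ?_, fun X r hr => (hψσ s hs X r hr).2, fun X hXs hX => ?_⟩,
    fun s s' hs hs' X hXs hhist => ?_,
    fun s hs => hvia _ _ s (compatible_next_obsOf tn Tn hs)⟩
  · obtain ⟨r, hr⟩ := Option.isSome_iff_exists.1 hX
    exact (hψσ s hs X r hr).1
  · by_cases hmem : X ∈ Tn
    · rwa [(hTnσ s hs X hmem).2]
    · exact htn.trans (WithBot.coe_lt_coe.2 (hlate s hs X hXs hX hmem))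
  · cases hX : c.ψ X with
    | some r => exact ⟨(hψσ s' hs' X r hX).1, by rw [(hψσ s' hs' X r hX).2, (hψσ s hs X r hX).2]⟩
    | none =>
      by_cases hmem : X ∈ Tn
      · exact ⟨(hTnσ s' hs' X hmem).1, by rw [(hTnσ s' hs' X hmem).2, (hTnσ s hs X hmem).2]⟩
      · have hlt := hlate s hs X hXs hX hmem
        -- `X` comes after `tn`, so its history records every observation made at `tn`.
        have hobs : obsOf Γ Tn s' = obsOf Γ Tn s := by
          funext p
          by_cases hp : Γ.obs p ∈ Tn
          · have h := congrFun hhist p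
            obtain ⟨a, b⟩ := hTnσ s hs _ hp
            obtain ⟨a', b'⟩ := hTnσ s' hs' _ hp
            simp only [CSTN.Hist, a, a', b, b', hlt, and_self, if_true] at h
            simp [obsOf, hp, h]
          · simp [obsOf, hp]
        have hσs' : σ s' = τ (obsOf Γ Tn s) (isObs_obsOf Γ Tn s) s' := by
          have hcongr : ∀ o (ho : IsObs Γ Tn o), o = obsOf Γ Tn s →
              τ o ho s' = τ (obsOf Γ Tn s) (isObs_obsOf Γ Tn s) s' := by
            rintro o ho rfl
            rfl
          exact hcongr _ _ hobs
        have hs'' := compatible_next_obsOf (Γ := Γ) tn Tn hs'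
        rw [hobs] at hs''
        rw [hist_congr Γ hσs'] at hhist
        rw [hσs']
        exact hdyn _ _ s s' (compatible_next_obsOf tn Tn hs) hs'' X hXs
          ((hist_congr Γ rfl _).trans hhist)

/-- **Lemma 13** (inductive case). A CSTN `Γ` is dynamically controllable from a
non-terminal configuration `c = (t, ψ, h)` iff there exists a next action
`(t_next, 𝒯_next)` for `ψ` such that, for every observation `o` of `𝒫_next`,
`Γ` is dynamically controllable from the next configuration `c[t_next/𝒯_next, o]`. -/
theorem dcFrom_nonterminal_iff {T P : Type} [Finite T] [Finite P]
    (Γ : CSTN T P) (c : CConfig T P) (hwf : c.WF Γ) (hnt : ¬ Terminal Γ c) :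
    DCFrom Γ c ↔
      ∃ (tn : ℝ) (Tn : Set T), NextAction c tn Tn ∧
        ∀ o : P → Option Bool, IsObs Γ Tn o →
          DCFrom Γ (nextConfig Γ c tn Tn o) := by
  exact ⟨exists_next_of_dcFrom hwf hnt, fun ⟨_, _, hna, hdc⟩ => dcFrom_of_next hna hdc⟩
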